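/- arXiv:1305.7473 — 6 statements merged into one kernel-verified Lean document; each statement's English description precedes it below -/
import Mathlib

section
/- Let G be a finite loopless directed graph that admits an h-local r-multi-coloring for some positive integers r < h. Then the fractional chromatic number of the underlying undirected graph satisfies χ*(G) ≤ (h/r)^{h/r} / (h/r − 1)^{h/r − 1}, where the powers are real powers. -/
open Classical

/-- The underlying undirected simple graph of a digraph given by an arc relation `D`. -/
def underlying {V : Type*} (D : V → V → Prop) : SimpleGraph V := SimpleGraph.fromRel D

/-- `A` is an independent set of the simple graph `G`. -/
def IsIndepF {V : Type*} (G : SimpleGraph V) (A : Finset V) : Prop :=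
  ∀ u ∈ A, ∀ v ∈ A, ¬ G.Adj u v

/-- A fractional coloring of `G`: nonnegative weights on the independent sets of `G` such
that the sets containing any fixed vertex have total weight at least `1`. -/
structure FracColoring {V : Type*} [Fintype V] (G : SimpleGraph V) where
  x : Finset V → ℝ
  nonneg : ∀ A, 0 ≤ x A
  supp : ∀ A, x A ≠ 0 → IsIndepF G A
  cover : ∀ v : V, 1 ≤ ∑ A : Finset V, if v ∈ A then x A else 0

/-- The total weight of a fractional coloring. -/
noncomputable def totalWeight {V : Type*} [Fintype V] {G : SimpleGraph V}
    (f : FracColoring G) : ℝ :=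
  ∑ A : Finset V, f.x A

/-- The fractional chromatic number `χ*(G)`: the minimum total weight of a fractional
coloring of `G`. -/
noncomputable def fracChrom {V : Type*} [Fintype V] (G : SimpleGraph V) : ℝ :=
  sInf {w : ℝ | ∃ f : FracColoring G, w = totalWeight f}

/-- The local weight of a fractional coloring of a digraph `D`:
`1` plus the maximum over vertices `v` of the total weight of the independent sets meeting
the out-neighborhood of `v`. -/
noncomputable def localWeight {V : Type*} [Fintype V] (D : V → V → Prop)
    (f : FracColoring (underlying D)) : ℝ :=
  1 + ⨆ v : V, ∑ A : Finset V, if ∃ u ∈ A, D v u then f.x A else 0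

/-- The fractional directed local chromatic number `ψ_d*(D)`: the minimum local weight of a
fractional coloring of `D`. -/
noncomputable def fracDirLocal {V : Type*} [Fintype V] (D : V → V → Prop) : ℝ :=
  sInf {w : ℝ | ∃ f : FracColoring (underlying D), w = localWeight D f}

/-- An `r`-multi-coloring of a digraph: every vertex gets `r` colors, and each color class
is an independent set of the underlying undirected graph. -/
def IsMultiColoring {V C : Type*} (D : V → V → Prop) (r : ℕ) (χ : V → Finset C) : Prop :=
  (∀ v, (χ v).card = r) ∧
  ∀ (c : C) (u v : V), c ∈ χ u → c ∈ χ v → ¬ (underlying D).Adj u v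

/-- An `h`-local `r`-multi-coloring: an `r`-multi-coloring in which the colors appearing on
any out-neighborhood number at most `h - r`. -/
def IsHLocalMulti {V C : Type*} [Fintype V] (D : V → V → Prop) (h r : ℕ)
    (χ : V → Finset C) : Prop :=
  IsMultiColoring D r χ ∧
  ∀ v, ((Finset.univ.filter (fun u => D v u)).biUnion χ).card ≤ h - r

/-- The weight of a subset avoiding `Y` in the product measure sums to `t ^ |Y|`. -/
lemma sum_avoid {C : Type} (K Y : Finset C) (hY : Y ⊆ K) (t : ℝ) :
    ∑ S ∈ K.powerset, (if Disjoint S Y then (1 - t) ^ S.card * t ^ (K.card - S.card) else 0)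
      = t ^ Y.card := by
  rw [← Finset.sum_filter]
  have hset : K.powerset.filter (fun S => Disjoint S Y) = (K \ Y).powerset := by
    ext S
    simp [Finset.subset_sdiff]
  rw [hset]
  have hc : K.card = (K \ Y).card + Y.card := by
    rw [Finset.card_sdiff_add_card_eq_card hY]
  have h1 : ∀ S ∈ (K \ Y).powerset, (1 - t) ^ S.card * t ^ (K.card - S.card)
      = ((1 - t) ^ S.card * t ^ ((K \ Y).card - S.card)) * t ^ Y.card := by
    intro S hS
    have := Finset.card_le_card (Finset.mem_powerset.1 hS)
    rw [mul_assoc, ← pow_add]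
    congr 2
    omega
  rw [Finset.sum_congr rfl h1, ← Finset.sum_mul, Finset.sum_pow_mul_eq_add_pow]
  simp

/-- Averaging over a weighted family of independent sets bounds `fracChrom`. -/
lemma fracChrom_le_of_family {V ι : Type} [Fintype V] (G : SimpleGraph V) (P : Finset ι)
    (w : ι → ℝ) (F : ι → Finset V) (β : ℝ) (hβ : 0 < β)
    (hw : ∀ i ∈ P, 0 ≤ w i) (hsum : ∑ i ∈ P, w i = 1)
    (hF : ∀ i, IsIndepF G (F i))
    (hcov : ∀ v, β ≤ ∑ i ∈ P, if v ∈ F i then w i else 0) :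
    fracChrom G ≤ 1 / β := by
  have key : ∀ g : Finset V → ℝ, ∑ A : Finset V, g A * (∑ i ∈ P, if F i = A then w i else 0)
      = ∑ i ∈ P, g (F i) * w i := by
    intro g
    simp_rw [Finset.mul_sum]
    rw [Finset.sum_comm]
    refine Finset.sum_congr rfl fun i _ => ?_
    simp
  have hx0 : ∀ A : Finset V, 0 ≤ ∑ i ∈ P, if F i = A then w i else 0 := by
    intro A
    refine Finset.sum_nonneg fun i hi => ?_
    split_ifs
    · exact hw i hi
    · exact le_rfl
  let f : FracColoring G :=
    { x := fun A => (1 / β) * ∑ i ∈ P, if F i = A then w i else 0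
      nonneg := fun A => mul_nonneg (by positivity) (hx0 A)
      supp := by
        intro A hA
        by_contra hcon
        apply hA
        have : ∑ i ∈ P, (if F i = A then w i else 0) = 0 := by
          refine Finset.sum_eq_zero fun i _ => ?_
          rw [if_neg]
          rintro rfl
          exact hcon (hF i)
        simp only [this, mul_zero]
      cover := by
        intro v
        have h2 := key (fun A => if v ∈ A then 1 / β else 0)
        have h3 : ∑ A : Finset V, (if v ∈ A then
            (1 / β) * ∑ i ∈ P, (if F i = A then w i else 0) else 0)
            = (1 / β) * ∑ i ∈ P, if v ∈ F i then w i else 0 := by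
          rw [Finset.mul_sum]
          refine Eq.trans (Finset.sum_congr rfl fun A _ => ?_)
            (h2.trans (Finset.sum_congr rfl fun i _ => ?_))
          · split_ifs <;> simp
          · split_ifs <;> simp
        rw [h3, one_div, ← div_eq_inv_mul, le_div_iff₀ hβ, one_mul]
        exact hcov v }
  have htot : totalWeight f = 1 / β := by
    have h2 := key (fun _ => 1 / β)
    refine h2.trans ?_
    rw [← Finset.mul_sum, hsum, mul_one]
  rw [← htot]
  refine csInf_le ⟨0, ?_⟩ ⟨f, rfl⟩
  rintro _ ⟨g, rfl⟩
  exact Finset.sum_nonneg fun A _ => g.nonneg A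

/-- If a finite loopless digraph admits an `h`-local `r`-multi-coloring (with some color set)
for positive integers `r < h`, then the fractional chromatic number of the underlying graph
is at most `(h/r)^(h/r) / (h/r - 1)^(h/r - 1)` (real powers). -/
theorem stmt13 {V : Type} [Fintype V] (D : V → V → Prop) (hloop : ∀ v, ¬ D v v)
    (h r : ℕ) (hr : 0 < r) (hrh : r < h) (C : Type) (χ : V → Finset C)
    (hχ : IsHLocalMulti D h r χ) :
    fracChrom (underlying D) ≤
      ((h : ℝ) / r) ^ ((h : ℝ) / r) / ((h : ℝ) / r - 1) ^ ((h : ℝ) / r - 1) := by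
  obtain ⟨⟨hcard, hind⟩, hloc⟩ := hχ
  have hr' : (0 : ℝ) < r := by exact_mod_cast hr
  have hrh' : (r : ℝ) < h := by exact_mod_cast hrh
  have hh' : (0 : ℝ) < h := hr'.trans hrh'
  set N : V → Finset C := fun v => (Finset.univ.filter (fun u => D v u)).biUnion χ with hN
  set K : Finset C := Finset.univ.biUnion χ with hK
  set p : ℝ := 1 - (r : ℝ) / h with hp
  have hp0 : 0 < p := by
    rw [hp, sub_pos, div_lt_one hh']; exact hrh'
  have hp1 : p < 1 := by
    rw [hp]; linarith [div_pos hr' hh']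
  set t : ℝ := p ^ (1 / (r : ℝ)) with ht
  have ht0 : 0 < t := Real.rpow_pos_of_pos hp0 _
  have ht1 : t ≤ 1 := Real.rpow_le_one hp0.le hp1.le (by positivity)
  have htr : t ^ r = p := by
    rw [ht, one_div, Real.rpow_inv_natCast_pow hp0.le hr.ne']
  have hNK : ∀ v, N v ⊆ K := fun v =>
    Finset.biUnion_subset_biUnion_of_subset_left _ (Finset.subset_univ _)
  have hχK : ∀ v, χ v ⊆ K := fun v => Finset.subset_biUnion_of_mem χ (Finset.mem_univ v)
  have hdisj : ∀ v, Disjoint (N v) (χ v) := by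
    intro v
    rw [Finset.disjoint_left]
    intro c hc hcv
    simp only [hN, Finset.mem_biUnion, Finset.mem_filter, Finset.mem_univ, true_and] at hc
    obtain ⟨u, hvu, hcu⟩ := hc
    refine hind c v u hcv hcu ?_
    rw [underlying, SimpleGraph.fromRel_adj]
    exact ⟨fun e => hloop v (by rw [← e] at hvu; exact hvu), Or.inl hvu⟩
  have hβ : 0 < t ^ (h - r) * (1 - p) := mul_pos (pow_pos ht0 _) (by linarith)
  have main := fracChrom_le_of_family (underlying D) K.powerset
    (fun S => (1 - t) ^ S.card * t ^ (K.card - S.card))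
    (fun S => Finset.univ.filter (fun v => Disjoint S (N v) ∧ ¬ Disjoint S (χ v)))
    (t ^ (h - r) * (1 - p)) hβ
    (fun S _ => mul_nonneg (pow_nonneg (by linarith) _) (pow_nonneg ht0.le _))
    (by rw [Finset.sum_pow_mul_eq_add_pow]; simp)
    (by
      have aux : ∀ (S : Finset C) (u v : V), Disjoint S (N u) → ¬ Disjoint S (χ v) →
          ¬ D u v := by
        intro S u v h1 h2 h3
        apply h2
        refine Finset.disjoint_of_subset_right ?_ h1
        exact Finset.subset_biUnion_of_mem χ (by simpa using h3)
      intro S u hu v hv hadj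
      simp only [Finset.mem_filter, Finset.mem_univ, true_and] at hu hv
      rw [underlying, SimpleGraph.fromRel_adj] at hadj
      rcases hadj.2 with hd | hd
      · exact aux S u v hu.1 hv.2 hd
      · exact aux S v u hv.1 hu.2 hd)
    (by
      intro v
      have e1 := sum_avoid K (N v) (hNK v) t
      have e2 := sum_avoid K (N v ∪ χ v) (Finset.union_subset (hNK v) (hχK v)) t
      rw [Finset.card_union_of_disjoint (hdisj v), hcard, pow_add, htr] at e2
      have e3 : ∑ S ∈ K.powerset, (if v ∈ Finset.univ.filter
          (fun v => Disjoint S (N v) ∧ ¬ Disjoint S (χ v)) then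
            (1 - t) ^ S.card * t ^ (K.card - S.card) else 0)
          = t ^ (N v).card - t ^ (N v).card * p := by
        rw [← e2, ← e1, ← Finset.sum_sub_distrib]
        refine Finset.sum_congr rfl fun S _ => ?_
        simp only [Finset.mem_filter, Finset.mem_univ, true_and, Finset.disjoint_union_right]
        by_cases a : Disjoint S (N v) <;> by_cases b : Disjoint S (χ v) <;> simp [a, b]
      rw [e3]
      have e4 : t ^ (h - r) ≤ t ^ (N v).card := pow_le_pow_of_le_one ht0.le ht1 (hloc v)
      nlinarith)
  refine main.trans (le_of_eq ?_)
  set x : ℝ := (h : ℝ) / r with hx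
  have hx1 : 1 < x := by rw [hx, one_lt_div hr']; exact hrh'
  have hpx : p = (x - 1) / x := by rw [hp, hx]; field_simp
  have e5 : t ^ (h - r) = p ^ (x - 1) := by
    rw [ht, ← Real.rpow_natCast, ← Real.rpow_mul hp0.le, Nat.cast_sub hrh.le]
    congr 1
    rw [hx]; field_simp
  have e6 : 1 - p = 1 / x := by rw [hpx]; field_simp; ring
  rw [e5, e6, hpx, Real.div_rpow (by linarith) (by linarith)]
  have e7 : x ^ x = x ^ (x - 1) * x := by
    rw [Real.rpow_sub_one (by linarith)]; field_simp
  have e8 : 0 < x ^ (x - 1) := Real.rpow_pos_of_pos (by linarith) _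
  have e9 : 0 < (x - 1) ^ (x - 1) := Real.rpow_pos_of_pos (by linarith) _
  have e10 : 0 < x := by linarith
  rw [e7]
  generalize x ^ (x - 1) = a at *
  generalize (x - 1) ^ (x - 1) = b at *
  field_simp
end

section
/- For all integers m ≥ k ≥ 2, the directed local chromatic number of the digraph U_d(m,k) equals k: the natural coloring (c,H) ↦ c witnesses ψ_d(U_d(m,k)) ≤ k, and U_d(m,k) contains a complete directed subgraph (both arcs between any two of its vertices) on k vertices, which forces ψ_d(U_d(m,k)) ≥ k. -/
open Classical

/-- The directed local chromatic number `ψ_d(D)`: the minimum over proper colorings of the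
underlying graph of `max_v |{c(u) : u ∈ N₊(v)}| + 1`. -/
noncomputable def dirLocalChrom {V : Type*} [Fintype V] (D : V → V → Prop) : ℕ :=
  sInf {n | ∃ c : V → ℕ, (∀ u v, (underlying D).Adj u v → c u ≠ c v) ∧
    n = Finset.univ.sup (fun v => (c '' {u | D v u}).ncard) + 1}

/-- The vertex set of the digraph `U_d(m,k)`: pairs `(c,H)` with `c ∈ [m]`, `H ⊆ [m]`,
`|H| = k-1` and `c ∉ H`. -/
abbrev UdVert (m k : ℕ) := {p : Fin m × Finset (Fin m) // p.2.card = k - 1 ∧ p.1 ∉ p.2}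

/-- The arc relation of `U_d(m,k)`: there is an arc from `(c,H)` to `(c',H')` iff `c' ∈ H`. -/
def UdArc (m k : ℕ) (u v : UdVert m k) : Prop := v.1.1 ∈ u.1.2

/-- For `m ≥ k ≥ 2`, `ψ_d(U_d(m,k)) = k`; moreover the natural coloring `(c,H) ↦ c` is a
proper coloring whose out-neighborhoods see at most `k - 1` colors (witnessing `ψ_d ≤ k`),
and `U_d(m,k)` contains a complete directed subgraph on `k` vertices (forcing `ψ_d ≥ k`). -/
theorem stmt14 (m k : ℕ) (hk : 2 ≤ k) (hm : k ≤ m) :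
    dirLocalChrom (UdArc m k) = k ∧
    ((∀ u v : UdVert m k, (underlying (UdArc m k)).Adj u v → u.1.1 ≠ v.1.1) ∧
      ∀ v : UdVert m k,
        ((fun w : UdVert m k => w.1.1) '' {u | UdArc m k v u}).ncard + 1 ≤ k) ∧
    ∃ S : Finset (UdVert m k), S.card = k ∧
      ∀ u ∈ S, ∀ v ∈ S, u ≠ v → UdArc m k u v ∧ UdArc m k v u := by
  have hA : ∀ u v : UdVert m k, (underlying (UdArc m k)).Adj u v → u.1.1 ≠ v.1.1 := by
    intro u v h e
    rw [underlying, SimpleGraph.fromRel_adj] at h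
    rcases h.2 with h | h
    · exact u.2.2 (e ▸ h)
    · exact v.2.2 (e ▸ h)
  have hB : ∀ v : UdVert m k,
      ((fun w : UdVert m k => w.1.1) '' {u | UdArc m k v u}).ncard + 1 ≤ k := by
    intro v
    have h1 : ((fun w : UdVert m k => w.1.1) '' {u | UdArc m k v u}).ncard
        ≤ (v.1.2 : Set (Fin m)).ncard := by
      apply Set.ncard_le_ncard _ (Set.toFinite _)
      rintro _ ⟨u, hu, rfl⟩
      exact hu
    rw [Set.ncard_coe_finset, v.2.1] at h1
    omega
  have hC : ∃ S : Finset (UdVert m k), S.card = k ∧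
      ∀ u ∈ S, ∀ v ∈ S, u ≠ v → UdArc m k u v ∧ UdArc m k v u := by
    obtain ⟨T, -, hT⟩ := Finset.exists_subset_card_eq
      (s := (Finset.univ : Finset (Fin m))) (n := k) (by simpa using hm)
    let f : {x // x ∈ T} → UdVert m k := fun x =>
      ⟨(x.1, T.erase x.1), by rw [Finset.card_erase_of_mem x.2, hT], by simp⟩
    have hf : Function.Injective f := by
      intro x y h
      have h2 : (f x).1.1 = (f y).1.1 := by rw [h]
      exact Subtype.ext h2
    refine ⟨T.attach.image f, ?_, ?_⟩
    · rw [Finset.card_image_of_injective _ hf, Finset.card_attach, hT]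
    · intro u hu v hv huv
      obtain ⟨x, -, rfl⟩ := Finset.mem_image.1 hu
      obtain ⟨y, -, rfl⟩ := Finset.mem_image.1 hv
      have hxy : x.1 ≠ y.1 := fun h => huv (by rw [Subtype.ext h])
      exact ⟨Finset.mem_erase.2 ⟨hxy.symm, y.2⟩, Finset.mem_erase.2 ⟨hxy, x.2⟩⟩
  refine ⟨?_, ⟨hA, hB⟩, hC⟩
  obtain ⟨S, hS, hSa⟩ := hC
  have lower : ∀ c : UdVert m k → ℕ,
      (∀ u v, (underlying (UdArc m k)).Adj u v → c u ≠ c v) →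
      k ≤ Finset.univ.sup (fun v => (c '' {u | UdArc m k v u}).ncard) + 1 := by
    intro c hc
    obtain ⟨v, hv⟩ : S.Nonempty := Finset.card_pos.1 (by omega)
    have h1 := Finset.le_sup (f := fun v => (c '' {u | UdArc m k v u}).ncard)
      (Finset.mem_univ v)
    have h2 : (c '' (S.erase v : Set (UdVert m k))).ncard
        ≤ (c '' {u | UdArc m k v u}).ncard := by
      apply Set.ncard_le_ncard _ (Set.toFinite _)
      apply Set.image_mono
      intro u hu
      have hu' := Finset.mem_erase.1 (Finset.mem_coe.1 hu)
      exact (hSa u hu'.2 v hv hu'.1).2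
    rw [Set.ncard_image_of_injOn, Set.ncard_coe_finset, Finset.card_erase_of_mem hv, hS] at h2
    · have h3 := le_trans h2 h1
      omega
    · intro a ha b hb hab
      by_contra hne
      have ha' := Finset.mem_erase.1 (Finset.mem_coe.1 ha)
      have hb' := Finset.mem_erase.1 (Finset.mem_coe.1 hb)
      refine hc a b ?_ hab
      rw [underlying, SimpleGraph.fromRel_adj]
      exact ⟨hne, Or.inl (hSa a ha'.2 b hb'.2 hne).1⟩
  have hA' : ∀ u v : UdVert m k, (underlying (UdArc m k)).Adj u v →
      (fun w : UdVert m k => (w.1.1 : ℕ)) u ≠ (fun w : UdVert m k => (w.1.1 : ℕ)) v :=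
    fun u v h e => hA u v h (Fin.ext e)
  apply le_antisymm
  · refine le_trans (Nat.sInf_le ⟨fun w => (w.1.1 : ℕ), hA', rfl⟩) ?_
    have : Finset.univ.sup (fun v : UdVert m k =>
        ((fun w : UdVert m k => (w.1.1 : ℕ)) '' {u | UdArc m k v u}).ncard) ≤ k - 1 := by
      apply Finset.sup_le
      intro v _
      have h := hB v
      have h2 : (fun w : UdVert m k => (w.1.1 : ℕ)) '' {u | UdArc m k v u} =
          Fin.val '' ((fun w : UdVert m k => w.1.1) '' {u | UdArc m k v u}) := by
        rw [Set.image_image]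
      rw [h2, Set.ncard_image_of_injective _ Fin.val_injective]
      omega
    omega
  · refine le_csInf ⟨_, fun w => (w.1.1 : ℕ), hA', rfl⟩ ?_
    rintro n ⟨c, hc, rfl⟩
    exact lower c hc
end

section
/- Let m ≥ k ≥ 2 be integers and let I be an independent set of the underlying undirected graph of U_d(m,k). Let C' = {c ∈ [m] : (c,H) ∈ I for some H}. Then every vertex (c,H) ∈ I satisfies c ∈ C' and H ∩ C' = ∅; consequently, writing l = m − |C'|, one has |I| ≤ (m−l)·binom(l, k−1), and hence the independence number of U_d(m,k) is at most max_{0 ≤ l ≤ m} (m−l)·binom(l, k−1). -/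
open Classical

theorem ud_disj (m k : ℕ) (I : Finset (UdVert m k))
    (hI : ∀ u ∈ I, ∀ v ∈ I, ¬ (underlying (UdArc m k)).Adj u v) :
    ∀ v ∈ I, ∀ c ∈ I.image (fun w : UdVert m k => w.1.1), c ∉ v.1.2 := by
  intro v hv c hc hcv
  obtain ⟨w, hw, rfl⟩ := Finset.mem_image.1 hc
  refine hI v hv w hw ?_
  unfold underlying
  rw [SimpleGraph.fromRel_adj]
  refine ⟨?_, Or.inl hcv⟩
  rintro rfl
  exact v.2.2 hcv

theorem ud_card (m k : ℕ) (I : Finset (UdVert m k))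
    (hI : ∀ u ∈ I, ∀ v ∈ I, ¬ (underlying (UdArc m k)).Adj u v) :
    I.card ≤ (m - (m - (I.image (fun w : UdVert m k => w.1.1)).card)) *
      Nat.choose (m - (I.image (fun w : UdVert m k => w.1.1)).card) (k - 1) := by
  have hd := ud_disj m k I hI
  have hmem : ∀ v ∈ I, v.1.1 ∈ I.image (fun w : UdVert m k => w.1.1) :=
    fun v hv => Finset.mem_image_of_mem (fun w : UdVert m k => w.1.1) hv
  generalize I.image (fun w : UdVert m k => w.1.1) = C at hd hmem ⊢
  have hC : C.card ≤ m := by simpa using C.card_le_univ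
  have hcompl : Cᶜ.card = m - C.card := by rw [Finset.card_compl, Fintype.card_fin]
  have h : I.card ≤ (C ×ˢ Finset.powersetCard (k - 1) Cᶜ).card := by
    refine Finset.card_le_card_of_injOn (fun v => v.1) ?_ (Subtype.val_injective.injOn)
    intro v hv
    have hv' : v ∈ I := hv
    refine Finset.mem_coe.2 (Finset.mem_product.2 ⟨hmem v hv', ?_⟩)
    refine Finset.mem_powersetCard.2 ⟨fun x hx => ?_, v.2.1⟩
    exact Finset.mem_compl.2 fun hxC => hd v hv' x hxC hx
  rw [Finset.card_product, Finset.card_powersetCard, hcompl] at h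
  rwa [Nat.sub_sub_self hC]

/-- Let `I` be an independent set of `U_d(m,k)` (no arc in either direction between two of
its vertices) and `C'` the set of first coordinates of members of `I`. Then every `(c,H) ∈ I`
has `c ∈ C'` and `H ∩ C' = ∅`; consequently, with `l = m - |C'|`,
`|I| ≤ (m-l)·C(l,k-1)`, and hence every independent set has size at most
`max_{0 ≤ l ≤ m} (m-l)·C(l,k-1)`. -/
theorem stmt15 (m k : ℕ) (hk : 2 ≤ k) (hm : k ≤ m)
    (I : Finset (UdVert m k))
    (hI : ∀ u ∈ I, ∀ v ∈ I, ¬ (underlying (UdArc m k)).Adj u v) :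
    (∀ v ∈ I, v.1.1 ∈ I.image (fun w : UdVert m k => w.1.1) ∧
      ∀ c ∈ I.image (fun w : UdVert m k => w.1.1), c ∉ v.1.2) ∧
    I.card ≤ (m - (m - (I.image (fun w : UdVert m k => w.1.1)).card)) *
      Nat.choose (m - (I.image (fun w : UdVert m k => w.1.1)).card) (k - 1) ∧
    (∀ J : Finset (UdVert m k),
      (∀ u ∈ J, ∀ v ∈ J, ¬ (underlying (UdArc m k)).Adj u v) →
      J.card ≤ (Finset.range (m + 1)).sup (fun l => (m - l) * Nat.choose l (k - 1))) := by
  refine ⟨fun v hv => ⟨Finset.mem_image_of_mem (fun w : UdVert m k => w.1.1) hv,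
    ud_disj m k I hI v hv⟩, ud_card m k I hI, fun J hJ => (ud_card m k J hJ).trans ?_⟩
  exact Finset.le_sup (f := fun l => (m - l) * Nat.choose l (k - 1))
    (Finset.mem_range.2 (by omega))
end

section
/- For all integers m ≥ k ≥ 2, the fractional chromatic number of the underlying undirected graph of U_d(m,k) satisfies χ*(U_d(m,k)) ≥ (1 − 1/m)^{k−1} · k^k/(k−1)^{k−1}. -/
open Classical

lemma aux_bern (n : ℕ) (z : ℝ) (hz : 0 ≤ z) : z ^ n * (n + 1 - n * z) ≤ 1 := by
  induction n with
  | zero => simp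
  | succ n ih =>
    have h1 : 0 ≤ z ^ n * ((n + 1) * (1 - z) ^ 2) := by positivity
    push_cast
    rw [pow_succ]
    nlinarith

lemma aux_amgm (n : ℕ) (hn : 1 ≤ n) (s m : ℝ) (hm : 0 < m) (hsm : s ≤ m) :
    s * (m - s) ^ n * ((n : ℝ) + 1) ^ (n + 1) ≤ m ^ (n + 1) * (n : ℝ) ^ n := by
  have hn' : (0 : ℝ) < n := by exact_mod_cast hn
  have h := aux_bern n ((n + 1) * (m - s) / (n * m))
    (div_nonneg (mul_nonneg (by positivity) (by linarith)) (by positivity))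
  have e : ((n : ℝ) + 1 - n * ((n + 1) * (m - s) / (n * m))) = (n + 1) * s / m := by
    field_simp
    ring
  rw [e, div_pow, div_mul_div_comm, div_le_one (by positivity), mul_pow, mul_pow] at h
  calc _ = (n + 1 : ℝ) ^ n * (m - s) ^ n * ((n + 1) * s) := by ring
    _ ≤ _ := h
    _ = _ := by ring

lemma aux_desc (a b r : ℕ) (h : a ≤ b) :
    a.descFactorial r * b ^ r ≤ b.descFactorial r * a ^ r := by
  induction r with
  | zero => simp
  | succ r ih =>
    rw [Nat.descFactorial_succ, Nat.descFactorial_succ]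
    have h1 : (a - r) * b ≤ (b - r) * a := by
      rw [Nat.sub_mul, Nat.sub_mul, mul_comm b a]
      exact Nat.sub_le_sub_left (Nat.mul_le_mul_left r h) _
    calc _ = ((a - r) * b) * (a.descFactorial r * b ^ r) := by ring
      _ ≤ ((b - r) * a) * (b.descFactorial r * a ^ r) := Nat.mul_le_mul h1 ih
      _ = _ := by ring

lemma aux_choose (a b r : ℕ) (h : a ≤ b) :
    a.choose r * b ^ r ≤ b.choose r * a ^ r := by
  have h1 := aux_desc a b r h
  rw [Nat.descFactorial_eq_factorial_mul_choose, Nat.descFactorial_eq_factorial_mul_choose,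
    mul_assoc, mul_assoc] at h1
  exact Nat.le_of_mul_le_mul_left h1 (Nat.factorial_pos r)

lemma card_UdVert (m k : ℕ) : m * (m - 1).choose (k - 1) ≤ Fintype.card (UdVert m k) := by
  have h : ((Finset.univ : Finset (Fin m)).sigma
      (fun c => Finset.powersetCard (k - 1) ({c}ᶜ : Finset (Fin m)))).card
      = m * (m - 1).choose (k - 1) := by
    simp [Finset.card_sigma, Finset.card_compl]
  rw [← h, Fintype.card_subtype]
  refine Finset.card_le_card_of_injOn (fun p => (p.1, p.2)) ?_ ?_
  · rintro ⟨c, H⟩ hp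
    simp only [Finset.coe_sigma, Set.mem_sigma_iff, Finset.mem_coe, Finset.mem_powersetCard] at hp
    simp only [Finset.coe_filter, Set.mem_setOf_eq, Finset.mem_univ, true_and]
    refine ⟨hp.2.2, fun hc => ?_⟩
    simpa using hp.2.1 hc
  · rintro ⟨c, H⟩ _ ⟨c', H'⟩ _ h
    simp only [Prod.mk.injEq] at h
    obtain ⟨rfl, rfl⟩ := h
    rfl

lemma card_indep (m k : ℕ) (A : Finset (UdVert m k)) (hA : IsIndepF (underlying (UdArc m k)) A)
    (hne : A.Nonempty) :
    ∃ s : ℕ, 1 ≤ s ∧ s ≤ m ∧ A.card ≤ s * (m - s).choose (k - 1) := by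
  set C : Finset (Fin m) := A.image (fun v => v.1.1) with hC
  refine ⟨C.card, (hne.image _).card_pos, by simpa using C.card_le_univ, ?_⟩
  have h : (C ×ˢ Finset.powersetCard (k - 1) Cᶜ).card = C.card * (m - C.card).choose (k - 1) := by
    simp [Finset.card_product, Finset.card_compl]
  rw [← h]
  refine Finset.card_le_card_of_injOn (fun v => v.1) ?_ (fun a _ b _ h => Subtype.ext h)
  intro v hv
  simp only [Finset.mem_coe, Finset.mem_product, Finset.mem_powersetCard] at hv ⊢
  refine ⟨Finset.mem_image_of_mem _ hv, ?_, v.2.1⟩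
  intro c hc
  rw [Finset.mem_compl, hC, Finset.mem_image]
  rintro ⟨u, hu, rfl⟩
  refine hA v hv u hu ?_
  unfold underlying
  rw [SimpleGraph.fromRel_adj]
  refine ⟨?_, Or.inl hc⟩
  rintro rfl
  exact v.2.2 hc

lemma card_bound (m n : ℕ) (hn : 1 ≤ n) (hm : n + 1 ≤ m) (A : Finset (UdVert m (n + 1)))
    (hA : IsIndepF (underlying (UdArc m (n + 1))) A) :
    (1 - 1 / (m : ℝ)) ^ n * (((n : ℝ) + 1) ^ (n + 1) / (n : ℝ) ^ n) * A.card
      ≤ Fintype.card (UdVert m (n + 1)) := by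
  rcases A.eq_empty_or_nonempty with rfl | hne
  · simp
  obtain ⟨s, hs1, hsm, hc⟩ := card_indep m (n + 1) A hA hne
  have hV := card_UdVert m (n + 1)
  simp only [Nat.add_sub_cancel] at hc hV
  have hch := aux_choose (m - s) (m - 1) n (by omega)
  have hm0 : (0 : ℝ) < m := by exact_mod_cast (by omega : 0 < m)
  have hm1 : (1 : ℝ) ≤ m := by exact_mod_cast (by omega : 1 ≤ m)
  have hn0 : (0 : ℝ) < n := by exact_mod_cast hn
  have ham := aux_amgm n hn s m hm0 (by exact_mod_cast hsm)
  have hc' : (A.card : ℝ) ≤ s * (m - s).choose n := by exact_mod_cast hc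
  have hV' : (m : ℝ) * (m - 1).choose n ≤ Fintype.card (UdVert m (n + 1)) := by exact_mod_cast hV
  have hch' : ((m - s).choose n : ℝ) * ((m : ℝ) - 1) ^ n ≤ (m - 1).choose n * ((m : ℝ) - s) ^ n := by
    have : (((m - s).choose n * (m - 1) ^ n : ℕ) : ℝ) ≤ ((m - 1).choose n * (m - s) ^ n : ℕ) := by
      exact_mod_cast hch
    rw [Nat.cast_mul, Nat.cast_mul, Nat.cast_pow, Nat.cast_pow, Nat.cast_sub hsm,
      Nat.cast_sub (by omega : 1 ≤ m), Nat.cast_one] at this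
    exact this
  refine le_trans ?_ hV'
  have e : (1 - 1 / (m : ℝ)) = (m - 1) / m := by field_simp
  rw [e, div_pow, div_mul_div_comm, div_mul_eq_mul_div, div_le_iff₀ (by positivity)]
  have hm1' : (0 : ℝ) ≤ m - 1 := by linarith
  calc ((m : ℝ) - 1) ^ n * ((n : ℝ) + 1) ^ (n + 1) * A.card
      ≤ ((m : ℝ) - 1) ^ n * ((n : ℝ) + 1) ^ (n + 1) * (s * (m - s).choose n) := by gcongr
    _ = (s * ((n : ℝ) + 1) ^ (n + 1)) * ((m - s).choose n * ((m : ℝ) - 1) ^ n) := by ring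
    _ ≤ (s * ((n : ℝ) + 1) ^ (n + 1)) * ((m - 1).choose n * ((m : ℝ) - s) ^ n) := by gcongr
    _ = (s * ((m : ℝ) - s) ^ n * ((n : ℝ) + 1) ^ (n + 1)) * (m - 1).choose n := by ring
    _ ≤ ((m : ℝ) ^ (n + 1) * (n : ℝ) ^ n) * (m - 1).choose n := by gcongr
    _ = _ := by ring

lemma frac_lower {V : Type*} [Fintype V] [Nonempty V] (G : SimpleGraph V) (b : ℝ)
    (h : ∀ A : Finset V, IsIndepF G A → b * A.card ≤ Fintype.card V) (hb : 0 ≤ b) :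
    b ≤ fracChrom G := by
  refine le_csInf ?_ ?_
  · refine ⟨_, ⟨⟨fun A => if A.card = 1 then 1 else 0, ?_, ?_, ?_⟩, rfl⟩⟩
    · intro A
      split_ifs <;> norm_num
    · intro A hA
      have h1 : A.card = 1 := by
        by_contra h1
        simp [h1] at hA
      obtain ⟨a, rfl⟩ := Finset.card_eq_one.mp h1
      intro u hu v hv
      rw [Finset.mem_singleton] at hu hv
      subst hu
      subst hv
      exact G.irrefl
    · intro v
      refine le_trans ?_ (Finset.single_le_sum (fun A _ => ?_) (Finset.mem_univ {v}))
      · simp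
      · split_ifs <;> norm_num
  · rintro w ⟨f, rfl⟩
    have hV : (0 : ℝ) < Fintype.card V := by exact_mod_cast Fintype.card_pos
    have h1 : (Fintype.card V : ℝ) ≤ ∑ A : Finset V, A.card * f.x A := by
      calc (Fintype.card V : ℝ) = ∑ v : V, (1 : ℝ) := by simp
        _ ≤ ∑ v : V, ∑ A : Finset V, (if v ∈ A then f.x A else 0) :=
          Finset.sum_le_sum fun v _ => f.cover v
        _ = ∑ A : Finset V, ∑ v : V, (if v ∈ A then f.x A else 0) := Finset.sum_comm
        _ = _ := by
          refine Finset.sum_congr rfl fun A _ => ?_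
          simp [Finset.sum_ite_mem]
    have h2 : b * Fintype.card V ≤ totalWeight f * Fintype.card V := by
      calc b * Fintype.card V ≤ b * ∑ A : Finset V, A.card * f.x A := by gcongr
        _ = ∑ A : Finset V, (b * A.card) * f.x A := by
          rw [Finset.mul_sum]
          exact Finset.sum_congr rfl fun A _ => by ring
        _ ≤ ∑ A : Finset V, (Fintype.card V) * f.x A := by
          refine Finset.sum_le_sum fun A _ => ?_
          by_cases hx : f.x A = 0
          · simp [hx]
          · exact mul_le_mul_of_nonneg_right (h A (f.supp A hx)) (f.nonneg A)
        _ = _ := by rw [← Finset.mul_sum, mul_comm]; rfl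
    exact le_of_mul_le_mul_right h2 hV

/-- For `m ≥ k ≥ 2`, the fractional chromatic number of (the underlying undirected graph of)
`U_d(m,k)` is at least `(1 - 1/m)^(k-1) · k^k/(k-1)^(k-1)`. -/
theorem stmt16 (m k : ℕ) (hk : 2 ≤ k) (hm : k ≤ m) :
    (1 - 1 / (m : ℝ)) ^ (k - 1) * ((k : ℝ) ^ k / ((k : ℝ) - 1) ^ (k - 1)) ≤
      fracChrom (underlying (UdArc m k)) := by
  obtain ⟨n, rfl⟩ : ∃ n, k = n + 1 := ⟨k - 1, by omega⟩
  have hm1 : (1 : ℝ) ≤ m := by exact_mod_cast (by omega : 1 ≤ m)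
  have hpos : 0 < Fintype.card (UdVert m (n + 1)) :=
    lt_of_lt_of_le (Nat.mul_pos (by omega) (Nat.choose_pos (by omega))) (card_UdVert m (n + 1))
  haveI : Nonempty (UdVert m (n + 1)) := Fintype.card_pos_iff.mp hpos
  have e : (((n + 1 : ℕ) : ℝ)) = (n : ℝ) + 1 := by push_cast; ring
  rw [e, add_sub_cancel_right]
  change (1 - 1 / (m : ℝ)) ^ n * (((n : ℝ) + 1) ^ (n + 1) / (n : ℝ) ^ n) ≤ _
  refine frac_lower _ _ (fun A hA => ?_) ?_
  · exact card_bound m n (by omega) hm A hA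
  · have : 1 / (m : ℝ) ≤ 1 := by rw [div_le_one (by linarith)]; exact hm1
    have h0 : 0 ≤ 1 - 1 / (m : ℝ) := by linarith
    positivity
end

section
/- For all positive integers m, h, r with m ≥ h and 2r ≤ h, the natural multi-coloring (Q,H) ↦ Q of the digraph U_d(m,h,r) is an h-local r-multi-coloring, and consequently ψ_d*(U_d(m,h,r)) ≤ h/r. -/
open Classical

/-- The vertex set of the digraph `U_d(m,h,r)`: pairs `(Q,H)` of disjoint subsets of `[m]`
with `|Q| = r` and `|H| = h - r`. -/
abbrev UdVert2 (m h r : ℕ) :=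
  {p : Finset (Fin m) × Finset (Fin m) //
    p.1.card = r ∧ p.2.card = h - r ∧ Disjoint p.1 p.2}

/-- The arc relation of `U_d(m,h,r)`: an arc from `(Q,H)` to `(Q',H')` iff `Q' ⊆ H`. -/
def UdArc2 (m h r : ℕ) (u v : UdVert2 m h r) : Prop := v.1.1 ⊆ u.1.2

theorem ud_not_adj (m h r : ℕ) (c : Fin m) (u v : UdVert2 m h r)
    (hu : c ∈ u.1.1) (hv : c ∈ v.1.1) : ¬ (underlying (UdArc2 m h r)).Adj u v := by
  intro ha
  unfold underlying at ha
  rw [SimpleGraph.fromRel_adj] at ha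
  rcases ha.2 with h1 | h1
  · exact Finset.disjoint_left.1 u.2.2.2 hu (h1 hv)
  · exact Finset.disjoint_left.1 v.2.2.2 hv (h1 hu)

/-- The color class of `c` in the natural multi-coloring. -/
noncomputable def udClass (m h r : ℕ) (c : Fin m) : Finset (UdVert2 m h r) :=
  Finset.univ.filter (fun v => c ∈ v.1.1)

/-- Each color class gets weight `1/r`, with multiplicity. -/
noncomputable def udX (m h r : ℕ) (A : Finset (UdVert2 m h r)) : ℝ :=
  ∑ c : Fin m, if A = udClass m h r c then (1 : ℝ) / r else 0

theorem ud_sum (m h r : ℕ) (P : Finset (UdVert2 m h r) → Prop) [DecidablePred P] :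
    (∑ A : Finset (UdVert2 m h r), if P A then udX m h r A else 0) =
      ((Finset.univ.filter (fun c : Fin m => P (udClass m h r c))).card : ℝ) * (1 / r) := by
  have h1 : ∀ A : Finset (UdVert2 m h r), (if P A then udX m h r A else 0) =
      ∑ c : Fin m, if A = udClass m h r c then
        (if P (udClass m h r c) then (1 : ℝ) / r else 0) else 0 := by
    intro A
    by_cases hP : P A
    · rw [if_pos hP, udX]
      refine Finset.sum_congr rfl fun c _ => ?_
      by_cases hA : A = udClass m h r c
      · rw [if_pos hA, if_pos hA, if_pos (hA ▸ hP)]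
      · rw [if_neg hA, if_neg hA]
    · rw [if_neg hP]
      symm
      refine Finset.sum_eq_zero fun c _ => ?_
      by_cases hA : A = udClass m h r c
      · rw [if_pos hA, if_neg (hA ▸ hP)]
      · rw [if_neg hA]
  rw [Finset.sum_congr rfl fun A _ => h1 A, Finset.sum_comm]
  simp only [Finset.sum_ite_eq', Finset.mem_univ, if_true]
  rw [← Finset.sum_filter, Finset.sum_const, nsmul_eq_mul]

/-- The fractional coloring induced by the natural multi-coloring. -/
noncomputable def udFrac (m h r : ℕ) (hr : 0 < r) :
    FracColoring (underlying (UdArc2 m h r)) where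
  x := udX m h r
  nonneg A := Finset.sum_nonneg fun c _ => by split_ifs <;> positivity
  supp A hA := by
    obtain ⟨c, _, hc⟩ := Finset.exists_ne_zero_of_sum_ne_zero hA
    have hAc : A = udClass m h r c := by
      by_contra hn
      exact hc (if_neg hn)
    subst hAc
    intro u hu v hv
    exact ud_not_adj m h r c u v (Finset.mem_filter.1 hu).2 (Finset.mem_filter.1 hv).2
  cover v := by
    have key := ud_sum m h r (fun A => v ∈ A)
    have : (Finset.univ.filter (fun c : Fin m => v ∈ udClass m h r c)) = v.1.1 := by
      ext c
      simp [udClass]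
    rw [this, v.2.1, mul_one_div_cancel (by positivity)] at key
    refine le_of_eq (key.symm.trans ?_)
    congr!

/-- For positive integers `m ≥ h ≥ 2r`, the natural multi-coloring `(Q,H) ↦ Q` of
`U_d(m,h,r)` is an `h`-local `r`-multi-coloring, and consequently
`ψ_d*(U_d(m,h,r)) ≤ h/r`. -/
theorem stmt17 (m h r : ℕ) (hr : 0 < r) (hrh : 2 * r ≤ h) (hm : h ≤ m) :
    IsHLocalMulti (UdArc2 m h r) h r (fun v : UdVert2 m h r => v.1.1) ∧
      fracDirLocal (UdArc2 m h r) ≤ (h : ℝ) / r := by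
  refine ⟨⟨⟨fun v => v.2.1, fun c u v => ud_not_adj m h r c u v⟩, fun v => ?_⟩, ?_⟩
  · refine le_of_le_of_eq (Finset.card_le_card (t := v.1.2) ?_) v.2.2.1
    intro c hc
    obtain ⟨u, hu, hcu⟩ := (@Finset.mem_biUnion _ _ _ _ (_) _).1 hc
    exact (Finset.mem_filter.1 hu).2 hcu
  · have hr' : (0 : ℝ) < r := by exact_mod_cast hr
    have hh : (2 * r : ℝ) ≤ h := by exact_mod_cast hrh
    refine le_trans (csInf_le ⟨0, ?_⟩ ⟨udFrac m h r hr, rfl⟩) ?_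
    · rintro w ⟨f, rfl⟩
      unfold localWeight
      refine add_nonneg zero_le_one (Real.iSup_nonneg fun v => Finset.sum_nonneg fun A _ => ?_)
      split_ifs
      · exact f.nonneg A
      · exact le_refl _
    · unfold localWeight
      have key : (⨆ v : UdVert2 m h r, ∑ A : Finset (UdVert2 m h r),
          if ∃ u ∈ A, UdArc2 m h r v u then (udFrac m h r hr).x A else 0)
          ≤ ((h : ℝ) - r) * (1 / r) := by
        refine Real.iSup_le (fun v => ?_) (mul_nonneg (by linarith) (by positivity))
        refine le_of_eq_of_le (ud_sum m h r (fun A => ∃ u ∈ A, UdArc2 m h r v u)) ?_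
        refine mul_le_mul_of_nonneg_right ?_ (by positivity)
        rw [← Nat.cast_sub (by omega : r ≤ h), ← v.2.2.1]
        refine Nat.cast_le.2 (Finset.card_le_card ?_)
        intro c hc
        obtain ⟨u, hu, hvu⟩ := (Finset.mem_filter.1 hc).2
        exact hvu (Finset.mem_filter.1 hu).2
      have e : (h : ℝ) / r = 1 + ((h : ℝ) - r) * (1 / r) := by
        field_simp
        ring
      rw [e]
      linarith
end

section
/- For all positive integers m, h, r with m ≥ h and 2r ≤ h ≤ 2·(h−r) (i.e., r ≤ h/2), the fractional chromatic number of the underlying undirected graph of U_d(m,h,r) satisfies χ*(U_d(m,h,r)) ≥ (1 − h/m)^h · (h/r)^{h/r} / (h/r − 1)^{h/r − 1}, where the powers with non-integer exponents are real powers. -/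
open Classical

/-- Number of lists of length `n` satisfying `K`. -/
noncomputable def cntL {m : ℕ} : (List (Fin m) → Prop) → ℕ → ℕ
  | K, 0 => if K [] then 1 else 0
  | K, n + 1 => ∑ a : Fin m, cntL (fun l => K (a :: l)) n

lemma cntL_mono {m : ℕ} (n : ℕ) : ∀ (K K2 : List (Fin m) → Prop), (∀ l, K l → K2 l) →
    cntL K n ≤ cntL K2 n := by
  induction n with
  | zero =>
    intro K K2 h
    simp only [cntL]
    by_cases h1 : K []
    · simp [h1, h _ h1]
    · simp [h1]
  | succ n ih =>
    intro K K2 h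
    simp only [cntL]
    exact Finset.sum_le_sum fun a _ => ih _ _ fun l hl => h _ hl

lemma cntL_eq {m : ℕ} (n : ℕ) : ∀ (K : List (Fin m) → Prop),
    cntL K n = Fintype.card {f : Fin n → Fin m // K (List.ofFn f)} := by
  induction n with
  | zero =>
    intro K
    simp only [cntL, List.ofFn_zero]
    by_cases h1 : K []
    · simp [h1]
    · simp [h1]
  | succ n ih =>
    intro K
    simp only [cntL, ih]
    rw [← Fintype.card_sigma]
    refine Fintype.card_congr ⟨fun p => ⟨Fin.cons p.1 p.2.1, ?_⟩,
      fun f => ⟨f.1 0, ⟨fun i => f.1 i.succ, ?_⟩⟩, ?_, ?_⟩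
    · have := p.2.2
      simpa [List.ofFn_succ] using this
    · have := f.2
      rw [List.ofFn_succ] at this
      exact this
    · rintro ⟨a, f, hf⟩
      rfl
    · rintro ⟨f, hf⟩
      ext i
      refine Fin.cases ?_ (fun j => ?_) i <;> simp

lemma cntL_step {m : ℕ} (n : ℕ) : ∀ (K : List (Fin m) → Prop),
    (∀ l l2, l2.Sublist l → K l → K l2) →
    (cntL K (n + 2) : ℝ) ^ (n + 1) ≤ (cntL K (n + 1) : ℝ) ^ (n + 2) := by
  have fin : ∀ (n : ℕ) (K : List (Fin m) → Prop),
      (∀ a, (cntL (fun l => K (a :: l)) (n + 1) : ℝ) ^ (n + 1) ≤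
        cntL K (n + 1) * (cntL (fun l => K (a :: l)) n : ℝ) ^ (n + 1)) →
      (cntL K (n + 2) : ℝ) ^ (n + 1) ≤ (cntL K (n + 1) : ℝ) ^ (n + 2) := by
    intro n K h
    set N : ℝ := (cntL K (n + 1) : ℝ) with hN
    have hN0 : 0 ≤ N := by positivity
    obtain ⟨s, hs0, hs⟩ : ∃ s : ℝ, 0 ≤ s ∧ s ^ (n + 1) = N :=
      ⟨N ^ (((n + 1 : ℕ) : ℝ)⁻¹), by positivity, Real.rpow_inv_natCast_pow hN0 (by omega)⟩
    have h2 : ∀ a, (cntL (fun l => K (a :: l)) (n + 1) : ℝ) ≤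
        s * cntL (fun l => K (a :: l)) n := by
      intro a
      refine le_of_pow_le_pow_left₀ (n := n + 1) (by omega) (by positivity) ?_
      rw [mul_pow, hs]
      exact h a
    have h3 : (cntL K (n + 2) : ℝ) ≤ s * N := by
      rw [hN]
      have e1 : cntL K (n + 2) = ∑ a : Fin m, cntL (fun l => K (a :: l)) (n + 1) := rfl
      have e2 : cntL K (n + 1) = ∑ a : Fin m, cntL (fun l => K (a :: l)) n := rfl
      rw [e1, e2]
      push_cast
      rw [Finset.mul_sum]
      exact Finset.sum_le_sum fun a _ => h2 a
    calc (cntL K (n + 2) : ℝ) ^ (n + 1) ≤ (s * N) ^ (n + 1) := by gcongr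
      _ = N ^ (n + 2) := by rw [mul_pow, hs]; ring
  induction n with
  | zero =>
    intro K hK
    apply fin
    intro a
    by_cases h0 : K [a]
    · have e : cntL (fun l => K (a :: l)) 0 = 1 := by simp [cntL, h0]
      rw [e]
      have : cntL (fun l => K (a :: l)) 1 ≤ cntL K 1 :=
        cntL_mono _ _ _ fun l hl => hK _ _ (List.sublist_cons_self a l) hl
      simpa using this
    · have e : cntL (fun l => K (a :: l)) 1 = 0 := by
        simp only [cntL]
        refine Finset.sum_eq_zero fun b _ => ?_
        rw [if_neg]
        intro hb
        exact h0 (hK _ _ (by simp) hb)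
      rw [e]
      simp only [Nat.cast_zero, zero_add, pow_one]
      positivity
  | succ n ih =>
    intro K hK
    apply fin
    intro a
    have h1 : (cntL (fun l => K (a :: l)) (n + 2) : ℝ) ≤ cntL K (n + 2) := by
      exact_mod_cast cntL_mono _ _ _ fun l hl => hK _ _ (List.sublist_cons_self a l) hl
    have h2 := ih (fun l => K (a :: l)) (fun l l2 hl h => hK _ _ (hl.cons_cons a) h)
    calc (cntL (fun l => K (a :: l)) (n + 2) : ℝ) ^ (n + 2)
        = cntL (fun l => K (a :: l)) (n + 2) *
          (cntL (fun l => K (a :: l)) (n + 2) : ℝ) ^ (n + 1) := by ring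
      _ ≤ _ := by gcongr

lemma cntL_pow {m : ℕ} (K : List (Fin m) → Prop)
    (hK : ∀ l l2, l2.Sublist l → K l → K l2) (r n : ℕ) (hr : 0 < r) (hn : r ≤ n) :
    (cntL K n : ℝ) ≤ (cntL K r : ℝ) ^ ((n : ℝ) / r) := by
  induction n, hn using Nat.le_induction with
  | base =>
    have : (r : ℝ) ≠ 0 := by positivity
    rw [div_self this, Real.rpow_one]
  | succ n hn ih =>
    obtain ⟨j, rfl⟩ : ∃ j, n = j + 1 := ⟨n - 1, by omega⟩
    have h1 := cntL_step j K hK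
    have hb : (0 : ℝ) ≤ cntL K r := by positivity
    refine le_of_pow_le_pow_left₀ (n := j + 1) (by omega) (by positivity) ?_
    calc _ ≤ (cntL K (j + 1) : ℝ) ^ (j + 2) := h1
      _ ≤ ((cntL K r : ℝ) ^ (((j + 1 : ℕ) : ℝ) / r)) ^ (j + 2) := by gcongr
      _ = _ := by
        rw [← Real.rpow_natCast, ← Real.rpow_natCast, ← Real.rpow_mul hb, ← Real.rpow_mul hb]
        congr 1
        push_cast
        ring

lemma family_count {m : ℕ} (n : ℕ) (S : Finset (Finset (Fin m))) (hS : ∀ s ∈ S, s.card = n) :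
    n.factorial * S.card ≤
      Fintype.card {f : Fin n → Fin m // (List.ofFn f).toFinset ∈ S} := by
  have him : ∀ (f : Fin n → Fin m), (List.ofFn f).toFinset = Finset.univ.image f := by
    intro f; ext x; simp [List.mem_ofFn]
  have : n.factorial * S.card = Fintype.card (Equiv.Perm (Fin n) × S) := by
    simp [Fintype.card_prod, Fintype.card_perm]
  rw [this]
  have key : ∀ (σ : Equiv.Perm (Fin n)) (s : S),
      Finset.univ.image (fun i => s.1.orderEmbOfFin (hS _ s.2) (σ i)) = s.1 := by
    intro σ s
    ext x
    have := Finset.range_orderEmbOfFin s.1 (hS _ s.2)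
    rw [← Finset.mem_coe (s := s.1), ← this]
    simp only [Finset.mem_image, Finset.mem_univ, true_and, Set.mem_range]
    constructor
    · rintro ⟨i, hi⟩; exact ⟨_, hi⟩
    · rintro ⟨i, hi⟩; exact ⟨σ.symm i, by simpa using hi⟩
  refine Fintype.card_le_of_injective
    (fun p => ⟨fun i => p.2.1.orderEmbOfFin (hS _ p.2.2) (p.1 i), ?_⟩) ?_
  · rw [him, key]; exact p.2.2
  · rintro ⟨σ, s⟩ ⟨τ, t⟩ h
    have hv := congrArg Subtype.val h
    simp only at hv
    have hst : s = t := by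
      apply Subtype.ext
      rw [← key σ s, ← key τ t, hv]
    subst hst
    have : σ = τ := by
      refine Equiv.ext fun i => ?_
      have := congrFun hv i
      simpa using this
    rw [this]

lemma opt_bound (k x : ℝ) (hk : 1 < k) (hx0 : 0 ≤ x) (hx1 : x ≤ 1) :
    x * (1 - x) ^ (k - 1) * (k ^ k / (k - 1) ^ (k - 1)) ≤ 1 := by
  have hk0 : 0 < k := by linarith
  have hk1 : 0 < k - 1 := by linarith
  have h1x : 0 ≤ 1 - x := by linarith
  have hy : 0 ≤ (k - 1) * x := by positivity
  have h := Real.geom_mean_le_arith_mean2_weighted (w₁ := 1 / k) (w₂ := (k - 1) / k)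
    (p₁ := (k - 1) * x) (p₂ := 1 - x) (by positivity) (by positivity) hy h1x
    (by field_simp; ring)
  have e : 1 / k * ((k - 1) * x) + (k - 1) / k * (1 - x) = (k - 1) / k := by field_simp; ring
  rw [e] at h
  have h2 := Real.rpow_le_rpow (by positivity) h hk0.le
  rw [Real.mul_rpow (by positivity) (by positivity), ← Real.rpow_mul hy, ← Real.rpow_mul h1x,
    Real.div_rpow hk1.le hk0.le] at h2
  have e1 : 1 / k * k = 1 := by field_simp
  have e2 : (k - 1) / k * k = k - 1 := by field_simp
  rw [e1, e2, Real.rpow_one] at h2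
  have e3 : (k - 1) ^ k = (k - 1) ^ (k - 1) * (k - 1) := by
    rw [← Real.rpow_add_one hk1.ne']; congr 1; ring
  rw [e3] at h2
  have p1 : 0 < (k - 1) ^ (k - 1) := by positivity
  have p2 : 0 < k ^ k := by positivity
  rw [le_div_iff₀ p2] at h2
  rw [mul_div_assoc', div_le_one p1]
  refine le_of_mul_le_mul_left ?_ hk1
  linarith

lemma card_vert (m h r : ℕ) (hrh : r ≤ h) :
    Fintype.card (UdVert2 m h r) * (r.factorial * (h - r).factorial) = m.descFactorial h := by
  have e : Fintype.card (UdVert2 m h r) = m.choose r * (m - r).choose (h - r) := by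
    rw [Fintype.card_subtype]
    have : (Finset.univ.filter fun p : Finset (Fin m) × Finset (Fin m) =>
        p.1.card = r ∧ p.2.card = h - r ∧ Disjoint p.1 p.2) =
        ((Finset.powersetCard r (Finset.univ : Finset (Fin m))).sigma
          (fun Q => Finset.powersetCard (h - r) Qᶜ)).map
          (Equiv.sigmaEquivProd _ _).toEmbedding := by
      ext ⟨Q, H⟩
      simp [Finset.mem_powersetCard, Finset.subset_compl_comm, ← Finset.subset_compl_iff_disjoint_right]
      tauto
    rw [this, Finset.card_map, Finset.card_sigma]
    rw [Finset.sum_congr rfl (g := fun _ => (m - r).choose (h - r))]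
    · simp
    · intro Q hQ
      rw [Finset.mem_powersetCard] at hQ
      simp [Finset.card_compl, hQ.2]
  rw [e, ← Nat.descFactorial_mul_descFactorial hrh, Nat.descFactorial_eq_factorial_mul_choose,
    Nat.descFactorial_eq_factorial_mul_choose]
  ring

lemma indep_bound (m h r : ℕ) (hr : 0 < r) (hrh : 2 * r ≤ h) (hm : h ≤ m)
    (A : Finset (UdVert2 m h r)) (hA : IsIndepF (underlying (UdArc2 m h r)) A) :
    (A.card : ℝ) * (r.factorial * (h - r).factorial) *
      (((h : ℝ) / r) ^ ((h : ℝ) / r) / ((h : ℝ) / r - 1) ^ ((h : ℝ) / r - 1)) ≤ (m : ℝ) ^ h := by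
  set QQ : Finset (Finset (Fin m)) := A.image (fun v => v.1.1) with hQQ
  set HH : Finset (Finset (Fin m)) := A.image (fun v => v.1.2) with hHH
  obtain ⟨K, hKdef⟩ : ∃ K : List (Fin m) → Prop, ∀ l, K l ↔ ∀ Q ∈ QQ, ¬ Q ⊆ l.toFinset :=
    ⟨_, fun _ => Iff.rfl⟩
  have hQr : ∀ Q ∈ QQ, Q.card = r := by
    intro Q hQ
    obtain ⟨v, _, rfl⟩ := Finset.mem_image.1 hQ
    exact v.2.1
  have hHr : ∀ H ∈ HH, H.card = h - r := by
    intro Q hQ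
    obtain ⟨v, _, rfl⟩ := Finset.mem_image.1 hQ
    exact v.2.2.1
  have hno : ∀ Q ∈ QQ, ∀ H ∈ HH, ¬ Q ⊆ H := by
    intro Q hQ H hH hsub
    obtain ⟨v, hv, rfl⟩ := Finset.mem_image.1 hQ
    obtain ⟨u, hu, rfl⟩ := Finset.mem_image.1 hH
    by_cases huv : u = v
    · subst huv
      have h1 := u.2.2.2.mono_right hsub
      rw [disjoint_self] at h1
      have := u.2.1
      rw [h1] at this
      simp at this
      omega
    · exact hA u hu v hv (by
        unfold underlying
        rw [SimpleGraph.fromRel_adj]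
        exact ⟨huv, Or.inl hsub⟩)
  have hKs : ∀ l l2, l2.Sublist l → K l → K l2 := by
    intro l l2 hl hk
    rw [hKdef] at hk ⊢
    intro Q hQ hs
    refine hk Q hQ (hs.trans ?_)
    intro x hx
    simp only [List.mem_toFinset] at hx ⊢
    exact hl.subset hx
  have hAc : A.card ≤ QQ.card * HH.card := by
    rw [← Finset.card_product]
    refine Finset.card_le_card_of_injOn (fun v => v.1) ?_ ?_
    · intro v hv
      simp only [Finset.coe_product, Set.mem_prod, Finset.mem_coe]
      exact ⟨Finset.mem_image_of_mem _ hv, Finset.mem_image_of_mem _ hv⟩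
    · intro u _ v _ h; exact Subtype.ext h
  have hH1 : (h - r).factorial * HH.card ≤ cntL K (h - r) := by
    refine (family_count _ HH hHr).trans ?_
    rw [cntL_eq]
    exact Fintype.card_subtype_mono _ _ fun f hf => (hKdef _).2 fun Q hQ => hno Q hQ _ hf
  have hQ1 : r.factorial * QQ.card + cntL K r ≤ m ^ r := by
    have h1 := family_count _ QQ hQr
    have h2 : Fintype.card {f : Fin r → Fin m // (List.ofFn f).toFinset ∈ QQ} +
        Fintype.card {f : Fin r → Fin m // K (List.ofFn f)} ≤ m ^ r := by
      have hd : Disjoint (fun f : Fin r → Fin m => (List.ofFn f).toFinset ∈ QQ)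
          (fun f : Fin r → Fin m => K (List.ofFn f)) := by
        rw [Pi.disjoint_iff]
        intro f
        rw [Prop.disjoint_iff]
        rintro ⟨h1, h2⟩
        exact (hKdef _).1 h2 _ h1 (Finset.Subset.refl _)
      rw [← Fintype.card_subtype_or_disjoint _ _ hd]
      refine (Fintype.card_subtype_le _).trans ?_
      simp
    rw [cntL_eq]
    omega
  have hpow := cntL_pow K hKs r (h - r) hr (by omega)
  have hm0 : (0 : ℝ) < m := by exact_mod_cast (by omega : 0 < m)
  have hr0 : (0 : ℝ) < r := by exact_mod_cast hr
  set k : ℝ := (h : ℝ) / r with hk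
  have hk2 : 1 < k := by
    rw [hk, lt_div_iff₀ hr0]
    have : r < h := by omega
    have : (r : ℝ) < h := by exact_mod_cast this
    linarith
  have hexp : (((h - r : ℕ) : ℝ)) / r = k - 1 := by
    rw [Nat.cast_sub (by omega), hk]; field_simp
  rw [hexp] at hpow
  set x : ℝ := (r.factorial * QQ.card : ℝ) / (m : ℝ) ^ r with hx
  have hmr : (0 : ℝ) < (m : ℝ) ^ r := by positivity
  have hQ2 : (r.factorial * QQ.card : ℝ) + cntL K r ≤ (m : ℝ) ^ r := by exact_mod_cast hQ1
  have hx0 : 0 ≤ x := by positivity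
  have hKr0 : (0 : ℝ) ≤ cntL K r := by positivity
  have hx1 : x ≤ 1 := by rw [hx, div_le_one hmr]; linarith
  have hxe : (r.factorial * QQ.card : ℝ) = x * (m : ℝ) ^ r := by rw [hx]; field_simp
  have hKr : (cntL K r : ℝ) ≤ (1 - x) * (m : ℝ) ^ r := by
    rw [sub_mul, ← hxe]; linarith
  have hH2 : ((h - r).factorial * HH.card : ℝ) ≤ (1 - x) ^ (k - 1) * (m : ℝ) ^ (h - r) := by
    calc ((h - r).factorial * HH.card : ℝ) ≤ cntL K (h - r) := by exact_mod_cast hH1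
      _ ≤ _ := hpow
      _ ≤ ((1 - x) * (m : ℝ) ^ r) ^ (k - 1) := Real.rpow_le_rpow hKr0 hKr (by linarith)
      _ = _ := by
        rw [Real.mul_rpow (by linarith) hmr.le]
        congr 1
        rw [← Real.rpow_natCast, ← Real.rpow_mul hm0.le, ← Real.rpow_natCast, ← hexp]
        congr 1
        field_simp
  have hob := opt_bound k x hk2 hx0 hx1
  set C : ℝ := k ^ k / (k - 1) ^ (k - 1) with hC
  have hk1 : 0 < k - 1 := by linarith
  have hC0 : 0 ≤ C := by positivity
  have hA2 : (A.card : ℝ) ≤ QQ.card * HH.card := by exact_mod_cast hAc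
  have hmm : (m : ℝ) ^ h = (m : ℝ) ^ r * (m : ℝ) ^ (h - r) := by
    rw [← pow_add]; congr 1; omega
  calc (A.card : ℝ) * (r.factorial * (h - r).factorial) * C
      ≤ (QQ.card * HH.card) * (r.factorial * (h - r).factorial) * C := by gcongr
    _ = (r.factorial * QQ.card) * ((h - r).factorial * HH.card) * C := by ring
    _ ≤ (x * (m : ℝ) ^ r) * ((1 - x) ^ (k - 1) * (m : ℝ) ^ (h - r)) * C := by
        rw [hxe]
        exact mul_le_mul_of_nonneg_right
          (mul_le_mul_of_nonneg_left hH2 (mul_nonneg hx0 hmr.le)) hC0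
    _ = (x * (1 - x) ^ (k - 1) * C) * (m : ℝ) ^ h := by rw [hmm]; ring
    _ ≤ 1 * (m : ℝ) ^ h := by gcongr
    _ = _ := one_mul _

lemma weight_bound {V : Type*} [Fintype V] {G : SimpleGraph V} (f : FracColoring G) (α : ℝ)
    (hα : ∀ A : Finset V, IsIndepF G A → (A.card : ℝ) ≤ α) :
    (Fintype.card V : ℝ) ≤ α * totalWeight f := by
  calc (Fintype.card V : ℝ) = ∑ v : V, (1 : ℝ) := by simp
    _ ≤ ∑ v : V, ∑ A : Finset V, (if v ∈ A then f.x A else 0) :=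
        Finset.sum_le_sum fun v _ => f.cover v
    _ = ∑ A : Finset V, ∑ v : V, (if v ∈ A then f.x A else 0) := Finset.sum_comm
    _ = ∑ A : Finset V, (A.card : ℝ) * f.x A := by
        refine Finset.sum_congr rfl fun A _ => ?_
        simp
    _ ≤ ∑ A : Finset V, α * f.x A := by
        refine Finset.sum_le_sum fun A _ => ?_
        by_cases h : f.x A = 0
        · simp [h]
        · exact mul_le_mul_of_nonneg_right (hα A (f.supp A h)) (f.nonneg A)
    _ = α * totalWeight f := by rw [totalWeight, Finset.mul_sum]

lemma frac_nonempty {V : Type*} [Fintype V] (G : SimpleGraph V) : Nonempty (FracColoring G) := by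
  refine ⟨⟨fun A => if IsIndepF G A then 1 else 0, ?_, ?_, ?_⟩⟩
  · intro A; split_ifs <;> norm_num
  · intro A h
    by_contra hc
    simp [hc] at h
  · intro v
    have h1 : IsIndepF G {v} := by
      intro a ha b hb
      simp only [Finset.mem_singleton] at ha hb
      subst ha; subst hb
      exact G.loopless.irrefl _
    refine le_trans ?_ (Finset.single_le_sum (f := fun A : Finset V =>
      if v ∈ A then (if IsIndepF G A then (1 : ℝ) else 0) else 0) ?_ (Finset.mem_univ {v}))
    · simp [h1]
    · intro A _
      split_ifs <;> norm_num

/-- For positive integers `m ≥ h ≥ 2r`, the fractional chromatic number of (the underlying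
undirected graph of) `U_d(m,h,r)` is at least
`(1 - h/m)^h · (h/r)^(h/r) / (h/r - 1)^(h/r - 1)`, with real powers in the non-integer
exponents. -/
theorem stmt19 (m h r : ℕ) (hr : 0 < r) (hrh : 2 * r ≤ h) (hm : h ≤ m) :
    (1 - (h : ℝ) / m) ^ h *
        (((h : ℝ) / r) ^ ((h : ℝ) / r) / ((h : ℝ) / r - 1) ^ ((h : ℝ) / r - 1)) ≤
      fracChrom (underlying (UdArc2 m h r)) := by
  have hm0 : (0 : ℝ) < m := by exact_mod_cast (by omega : 0 < m)
  have hr0 : (0 : ℝ) < r := by exact_mod_cast hr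
  have hk1 : 0 < (h : ℝ) / r - 1 := by
    rw [sub_pos, lt_div_iff₀ hr0]
    have : r < h := by omega
    have : (r : ℝ) < h := by exact_mod_cast this
    linarith
  have hk0 : 0 < (h : ℝ) / r := by linarith
  have hI := indep_bound m h r hr hrh hm
  set C : ℝ := ((h : ℝ) / r) ^ ((h : ℝ) / r) / ((h : ℝ) / r - 1) ^ ((h : ℝ) / r - 1) with hC
  have hC0 : 0 < C := by positivity
  set F : ℝ := (r.factorial * (h - r).factorial : ℝ) with hF
  have hF0 : 0 < F := by positivity
  unfold fracChrom
  refine le_csInf ?_ ?_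
  · obtain ⟨f⟩ := frac_nonempty (underlying (UdArc2 m h r))
    exact ⟨_, f, rfl⟩
  · rintro w ⟨f, rfl⟩
    have hw := weight_bound f ((m : ℝ) ^ h / (F * C)) (fun A hA => by
      rw [le_div_iff₀ (by positivity), ← mul_assoc]
      exact hI A hA)
    have hv : (Fintype.card (UdVert2 m h r) : ℝ) * F = m.descFactorial h := by
      rw [hF]
      exact_mod_cast card_vert m h r (by omega)
    have hd : ((m : ℝ) - h) ^ h ≤ m.descFactorial h := by
      have h1 : (m - h) ^ h ≤ m.descFactorial h :=
        (Nat.pow_le_pow_left (by omega) h).trans (Nat.pow_sub_le_descFactorial m h)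
      rw [← Nat.cast_sub hm]
      exact_mod_cast h1
    have hmh : (0 : ℝ) < (m : ℝ) ^ h := by positivity
    have e : (1 - (h : ℝ) / m) ^ h = ((m : ℝ) - h) ^ h / (m : ℝ) ^ h := by
      rw [← div_pow]; congr 1; field_simp
    rw [e, div_mul_eq_mul_div, div_le_iff₀ hmh]
    rw [div_mul_eq_mul_div, le_div_iff₀ (by positivity), ← mul_assoc, hv] at hw
    calc ((m : ℝ) - h) ^ h * C ≤ m.descFactorial h * C := by gcongr
      _ ≤ _ := by rw [mul_comm (totalWeight f)]; exact hw
end
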